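/- Let Δ ⊂ ℝⁿ be the simplex with vertices v₀ = 0 and vᵢ = (a₁, ..., aᵢ, 0, ..., 0) for i = 1,...,n, where a₁,...,aₙ > 0 (each vᵢ extends v_{i-1} by one positive coordinate aᵢ, with equal preceding coordinates). Let Δ_τ := Δ \ (ℝ^{n-1} × [0,τ)) for 0 < τ < min(1, aₙ). Then ∫_{Δ_τ} dx₁⋯dxₙ/(x₁⋯xₙ) = (log aₙ - log τ)ⁿ / n!. -/

import Mathlib

open MeasureTheory

/-!
Rescaling the `j`-th coordinate by `aⱼ` preserves `dx₁⋯dxₙ/(x₁⋯xₙ)` and turns `Δ` into the simplex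
`1 ≥ y₁ ≥ ⋯ ≥ yₙ ≥ 0`, in which `y` has barycentric coordinates `1 - y₁, y₁ - y₂, …, yₙ`; `Δ_τ`
becomes the part where `yₙ ≥ τ/aₙ`. Over `u ≥ y₁ ≥ ⋯ ≥ yₙ ≥ c` any product `f(y₁)⋯f(yₙ)` has
integral `(∫_c^u f)ⁿ/n!`: integrate `y₁` last and use that `Fⁿ⁺¹/(n+1)` is a primitive of `Fⁿ f`
when `F` is the primitive of `f` vanishing at `c`. Here `f(t) = 1/t`.
-/

/-- The order polytope of `ι`, scaled to `[c, u]` and with order-reversing families. For `ι = Fin n`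
it is the simplex `u ≥ y₁ ≥ ⋯ ≥ yₙ ≥ c`, with indices shifted to start at `0`. -/
def orderPolytope (ι : Type*) [Preorder ι] (c u : ℝ) : Set (ι → ℝ) :=
  {y | Antitone y ∧ ∀ i, y i ∈ Set.Icc c u}

/-- The vertex `(1, …, 1, 0, …, 0)`, with `i` ones, of `orderPolytope (Fin n) 0 1`: the vertex `vᵢ`
of the staircase simplex with all `aⱼ = 1`. -/
def stairVertex (n : ℕ) (i : Fin (n + 1)) (j : Fin n) : ℝ :=
  if (j : ℕ) < i then 1 else 0

section OrderPolytope

variable {ι : Type*} [Preorder ι] {b c u : ℝ} {n : ℕ}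

lemma convex_orderPolytope : Convex ℝ (orderPolytope ι c u) :=
  fun _ hx _ hy _ _ hs ht hst ↦ ⟨(hx.1.const_mul hs).add (hy.1.const_mul ht),
    fun i ↦ convex_Icc c u (hx.2 i) (hy.2 i) hs ht hst⟩

lemma isClosed_orderPolytope : IsClosed (orderPolytope ι c u) := by
  have h_box : IsClosed {y : ι → ℝ | ∀ i, y i ∈ Set.Icc c u} := by
    rw [Set.ofPred_forall]
    exact isClosed_iInter fun i ↦ isClosed_Icc.preimage (continuous_apply i)
  exact isClosed_antitone.inter h_box

lemma orderPolytope_inter_le_top [OrderTop ι] (hbc : b ≤ c) :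
    orderPolytope ι b u ∩ {y | c ≤ y ⊤} = orderPolytope ι c u := by
  ext y
  constructor
  · rintro ⟨⟨hy, hbu⟩, hc⟩
    exact ⟨hy, fun i ↦ ⟨hc.trans (hy le_top), (hbu i).2⟩⟩
  · rintro ⟨hy, hcu⟩
    exact ⟨⟨hy, fun i ↦ ⟨hbc.trans (hcu i).1, (hcu i).2⟩⟩, (hcu ⊤).1⟩

lemma cons_mem_orderPolytope_iff {t : ℝ} {y : Fin n → ℝ} :
    (Fin.cons t y : Fin (n + 1) → ℝ) ∈ orderPolytope (Fin (n + 1)) c u ↔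
      t ∈ Set.Icc c u ∧ y ∈ orderPolytope (Fin n) c t := by
  constructor
  · rintro ⟨hanti, hmem⟩
    exact ⟨hmem 0, fun i j hij ↦ hanti (Fin.succ_le_succ_iff.2 hij),
      fun i ↦ ⟨(hmem i.succ).1, hanti (Fin.zero_le i.succ)⟩⟩
  · rintro ⟨ht, hanti, hmem⟩
    refine ⟨?_, Fin.cases ht fun i ↦ ⟨(hmem i).1, (hmem i).2.trans ht.2⟩⟩
    cases n with
    | zero => exact Subsingleton.antitone (α := Fin 1) _
    | succ n => exact antitone_vecCons.2 ⟨(hmem 0).2, hanti⟩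

lemma stairVertex_mem_orderPolytope (i : Fin (n + 1)) :
    stairVertex n i ∈ orderPolytope (Fin n) 0 1 := by
  refine ⟨fun j k hjk ↦ ?_, fun j ↦ ?_⟩
  · have : (j : ℕ) ≤ k := hjk
    unfold stairVertex
    split_ifs <;> first | omega | norm_num
  · unfold stairVertex
    split_ifs <;> norm_num

lemma sum_sub_mul_stairVertex (Y : ℕ → ℝ) (j : Fin n) :
    ∑ i : Fin n, (Y i - Y (i + 1)) * stairVertex n i.succ j = Y j - Y n := by
  calc ∑ i : Fin n, (Y i - Y (i + 1)) * stairVertex n i.succ j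
      = ∑ i ∈ Finset.range n, if (j : ℕ) ≤ i then Y i - Y (i + 1) else 0 := by
        rw [← Fin.sum_univ_eq_sum_range (fun i ↦ if (j : ℕ) ≤ i then Y i - Y (i + 1) else 0)]
        simp [stairVertex]
    _ = ∑ i ∈ Finset.Ico (j : ℕ) n, (Y i - Y (i + 1)) := by
        rw [← Finset.sum_filter]
        congr 1
        ext i
        simp [and_comm]
    _ = Y j - Y n := by
        rw [← neg_inj, ← Finset.sum_neg_distrib]
        simpa using Finset.sum_Ico_sub Y j.is_lt.le

lemma convexHull_range_stairVertex :
    convexHull ℝ (Set.range (stairVertex n)) = orderPolytope (Fin n) 0 1 := by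
  refine (convexHull_min (Set.range_subset_iff.2 stairVertex_mem_orderPolytope)
    convex_orderPolytope).antisymm fun y ⟨hanti, hmem⟩ ↦ ?_
  let Y : ℕ → ℝ := fun k ↦ if h : k < n then y ⟨k, h⟩ else 0
  have Y_val (j : Fin n) : Y j = y j := by simp [Y]
  have Y_n : Y n = 0 := by simp [Y]
  have Y_le_one : Y 0 ≤ 1 := by
    simp only [Y]
    split_ifs with h
    · exact (hmem _).2
    · exact zero_le_one
  have Y_succ_le (i : Fin n) : Y (i + 1) ≤ Y i := by
    rw [Y_val]
    simp only [Y]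
    split_ifs with h
    · exact hanti (Fin.le_def.2 (Nat.le_succ i))
    · exact (hmem i).1
  refine mem_convexHull_of_exists_fintype (Fin.cons (1 - Y 0) fun i : Fin n ↦ Y i - Y (i + 1))
    (stairVertex n) (Fin.cases (sub_nonneg.2 Y_le_one) fun i ↦ sub_nonneg.2 (Y_succ_le i)) ?_
    Set.mem_range_self ?_
  · simp only [Fin.sum_univ_succ, Fin.cons_zero, Fin.cons_succ]
    rw [Fin.sum_univ_eq_sum_range (fun i ↦ Y i - Y (i + 1)), Finset.sum_range_sub', Y_n]
    ring
  · ext j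
    simpa [Fin.sum_univ_succ, Y_val, Y_n, stairVertex] using sum_sub_mul_stairVertex Y j

lemma convexHull_range_eq_image_orderPolytope {a : Fin n → ℝ} {v : Fin (n + 1) → Fin n → ℝ}
    (hv : ∀ i j, v i j = if (j : ℕ) < (i : ℕ) then a j else 0) :
    convexHull ℝ (Set.range v) = (a * ·) '' orderPolytope (Fin n) 0 1 := by
  have hv_mul : v = (a * ·) ∘ stairVertex n := by
    ext i j
    simp [hv, stairVertex]
  rw [hv_mul, Set.range_comp, ← convexHull_range_stairVertex]
  exact ((LinearMap.mulLeft ℝ a).image_convexHull _).symm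

end OrderPolytope

section Integration

variable {c u : ℝ} {n : ℕ} {f : ℝ → ℝ}

lemma setIntegral_orderPolytope_succ {E : Type*} [NormedAddCommGroup E] [NormedSpace ℝ E]
    {F : (Fin (n + 1) → ℝ) → E} (hF : IntegrableOn F (orderPolytope (Fin (n + 1)) c u)) :
    ∫ x in orderPolytope (Fin (n + 1)) c u, F x =
      ∫ t in Set.Icc c u, ∫ y in orderPolytope (Fin n) c t, F (Fin.cons t y) := by
  let S := orderPolytope (Fin (n + 1)) c u
  have hS : MeasurableSet S := isClosed_orderPolytope.measurableSet
  have he := (volume_preserving_piFinSuccAbove (fun _ : Fin (n + 1) ↦ ℝ) 0).symm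
  have h_slice (t : ℝ) (y : Fin n → ℝ) : S.indicator F (Fin.cons t y) =
      (Set.Icc c u).indicator (fun t ↦ (orderPolytope (Fin n) c t).indicator
        (fun y ↦ F (Fin.cons t y)) y) t := by
    classical
    by_cases ht : t ∈ Set.Icc c u <;>
      simp only [Set.indicator_apply, S, cons_mem_orderPolytope_iff, ht, true_and, false_and,
        if_true, if_false]
  have h_int : Integrable fun p : ℝ × (Fin n → ℝ) ↦ S.indicator F (Fin.cons p.1 p.2) := by
    simpa [Function.comp_def, Fin.insertNthEquiv] using
      (he.integrable_comp_emb (MeasurableEquiv.measurableEmbedding _)).2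
        ((integrable_indicator_iff hS).2 hF)
  calc ∫ x in S, F x = ∫ p : ℝ × (Fin n → ℝ), S.indicator F (Fin.cons p.1 p.2) := by
        rw [← integral_indicator hS, ← he.integral_comp']
        simp [Fin.insertNthEquiv]
    _ = ∫ t, ∫ y : Fin n → ℝ, S.indicator F (Fin.cons t y) := integral_prod _ h_int
    _ = ∫ t in Set.Icc c u, ∫ y in orderPolytope (Fin n) c t, F (Fin.cons t y) := by
        rw [← integral_indicator measurableSet_Icc]
        congr with t
        simp only [h_slice]
        by_cases ht : t ∈ Set.Icc c u
        · simp [ht, integral_indicator isClosed_orderPolytope.measurableSet]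
        · simp [ht]

lemma integrableOn_orderPolytope_prod {ι : Type*} [Fintype ι] [Preorder ι]
    (hf : IntegrableOn f (Set.Icc c u)) :
    IntegrableOn (fun y : ι → ℝ ↦ ∏ i, f (y i)) (orderPolytope ι c u) := by
  refine IntegrableOn.mono_set (t := Set.univ.pi fun _ ↦ Set.Icc c u) ?_ fun y hy i _ ↦ hy.2 i
  rw [IntegrableOn, volume_pi, Measure.restrict_pi_pi]
  exact Integrable.fintype_prod fun _ ↦ hf

lemma integral_primitive_pow_mul {a b : ℝ} (hf : IntervalIntegrable f volume a b) :
    ∫ t in a..b, (∫ s in a..t, f s) ^ n * f t = (∫ t in a..b, f t) ^ (n + 1) / (n + 1) := by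
  let F : ℝ → ℝ := fun t ↦ ∫ s in a..t, f s
  have hF : AbsolutelyContinuousOnInterval F a b :=
    hf.absolutelyContinuousOnInterval_intervalIntegral (by simp)
  have hF_pow (m : ℕ) : AbsolutelyContinuousOnInterval (fun t ↦ F t ^ (m + 1)) a b := by
    induction m with
    | zero => simpa using hF
    | succ m ih => simpa only [pow_succ _ (m + 1)] using ih.fun_mul hF
  have hF_pow_deriv : ∀ᵐ t, t ∈ Set.uIoc a b →
      deriv (fun t ↦ F t ^ (n + 1)) t = (n + 1) * (F t ^ n * f t) := by
    filter_upwards [hf.ae_hasDerivAt_integral] with t hF_deriv ht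
    have h := (hF_deriv (Set.uIoc_subset_uIcc ht) a (by simp)).fun_pow (n + 1)
    simpa [mul_assoc] using h.deriv
  have h_ftc : (n + 1) * ∫ t in a..b, F t ^ n * f t = F b ^ (n + 1) := by
    rw [← intervalIntegral.integral_const_mul, ← intervalIntegral.integral_congr_ae hF_pow_deriv,
      (hF_pow n).integral_deriv_eq_sub]
    simp [F]
  rw [eq_div_iff (by positivity), mul_comm, h_ftc]

lemma setIntegral_orderPolytope_prod (hcu : c ≤ u) (hf : IntegrableOn f (Set.Icc c u)) :
    ∫ y in orderPolytope (Fin n) c u, ∏ i, f (y i) = (∫ t in c..u, f t) ^ n / n.factorial := by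
  induction n generalizing u with
  | zero =>
    have h_univ : orderPolytope (Fin 0) c u = Set.univ :=
      Set.eq_univ_of_forall fun y ↦ ⟨Subsingleton.antitone y, nofun⟩
    simp [h_univ, measureReal_def, volume_pi]
  | succ n ih =>
    calc ∫ y in orderPolytope (Fin (n + 1)) c u, ∏ i, f (y i)
        = ∫ t in Set.Icc c u, f t * ∫ y in orderPolytope (Fin n) c t, ∏ i, f (y i) := by
          rw [setIntegral_orderPolytope_succ (integrableOn_orderPolytope_prod hf)]
          simp only [Fin.prod_univ_succ, Fin.cons_zero, Fin.cons_succ, integral_const_mul]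
      _ = ∫ t in Set.Icc c u, (∫ s in c..t, f s) ^ n * f t / n.factorial := by
          refine setIntegral_congr_fun measurableSet_Icc fun t ht ↦ ?_
          rw [ih ht.1 (hf.mono_set (Set.Icc_subset_Icc_right ht.2))]
          ring
      _ = (∫ t in c..u, (∫ s in c..t, f s) ^ n * f t) / n.factorial := by
          rw [integral_div, integral_Icc_eq_integral_Ioc, intervalIntegral.integral_of_le hcu]
      _ = (∫ t in c..u, f t) ^ (n + 1) / (n + 1).factorial := by
          rw [integral_primitive_pow_mul
            ((intervalIntegrable_iff_integrableOn_Icc_of_le hcu).2 hf), Nat.factorial_succ]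
          push_cast
          field_simp

lemma setIntegral_image_mul_left {ι E : Type*} [Fintype ι] [NormedAddCommGroup E]
    [NormedSpace ℝ E] {a : ι → ℝ} (ha : ∀ i, a i ≠ 0) {s : Set (ι → ℝ)} (hs : MeasurableSet s)
    (g : (ι → ℝ) → E) :
    ∫ x in (a * ·) '' s, g x = |∏ i, a i| • ∫ y in s, g (a * y) := by
  let L : (ι → ℝ) →L[ℝ] (ι → ℝ) := .pi fun i ↦ (a i • .id ℝ ℝ) ∘L .proj i
  have L_apply : ⇑L = (a * ·) := rfl
  have L_det : L.det = ∏ i, a i := by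
    rw [ContinuousLinearMap.det_pi]
    simp [ContinuousLinearMap.det]
  have L_inj : Function.Injective L := fun y z h ↦
    funext fun i ↦ mul_left_cancel₀ (ha i) (congrFun h i)
  rw [← L_apply, integral_image_eq_integral_abs_det_fderiv_smul volume hs
    (fun _ _ ↦ L.hasFDerivWithinAt) L_inj.injOn, L_det, integral_smul]
  rfl

lemma setIntegral_image_mul_left_prod_inv {ι : Type*} [Fintype ι] {a : ι → ℝ}
    (ha : ∀ i, 0 < a i) {s : Set (ι → ℝ)} (hs : MeasurableSet s) :
    ∫ x in (a * ·) '' s, (∏ i, x i)⁻¹ = ∫ y in s, ∏ i, (y i)⁻¹ := by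
  have h_pos : 0 < ∏ i, a i := Finset.prod_pos fun i _ ↦ ha i
  rw [setIntegral_image_mul_left (fun i ↦ (ha i).ne') hs, abs_of_pos h_pos, ← integral_smul]
  congr with y
  simp only [Pi.mul_apply, Finset.prod_mul_distrib, mul_inv, Finset.prod_inv_distrib, smul_eq_mul,
    mul_inv_cancel_left₀ h_pos.ne']

end Integration

theorem staircase_simplex_integral_general {n : ℕ}
    (a : Fin (n + 1) → ℝ) (ha : ∀ j, 0 < a j)
    (v : Fin (n + 2) → (Fin (n + 1) → ℝ))
    (hv : ∀ i j, v i j = if (j : ℕ) < (i : ℕ) then a j else 0)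
    (τ : ℝ) (hτ0 : 0 < τ) (hτa : τ ≤ a (Fin.last n)) :
    (∫ x in (convexHull ℝ (Set.range v)) ∩ {x : Fin (n + 1) → ℝ | τ ≤ x (Fin.last n)},
        (∏ j, x j)⁻¹) =
      (Real.log (a (Fin.last n)) - Real.log τ) ^ (n + 1) / (Nat.factorial (n + 1)) := by
  have h_last := ha (Fin.last n)
  set c := τ / a (Fin.last n) with hc
  have hc_pos : 0 < c := div_pos hτ0 h_last
  have hc_le : c ≤ 1 := (div_le_one h_last).2 hτa
  have h_region : convexHull ℝ (Set.range v) ∩ {x | τ ≤ x (Fin.last n)} =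
      (a * ·) '' orderPolytope (Fin (n + 1)) c 1 := by
    rw [convexHull_range_eq_image_orderPolytope hv, ← orderPolytope_inter_le_top hc_pos.le,
      ← Set.image_inter_preimage]
    congr! 2
    ext y
    simp [hc, div_le_iff₀' h_last, Fin.top_eq_last]
  have h_int : IntegrableOn (·⁻¹) (Set.Icc c 1) :=
    (continuousOn_inv₀.mono fun t ht ↦ (hc_pos.trans_le ht.1).ne').integrableOn_Icc
  rw [h_region, setIntegral_image_mul_left_prod_inv ha isClosed_orderPolytope.measurableSet,
    setIntegral_orderPolytope_prod hc_le h_int, integral_inv_of_pos hc_pos one_pos,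
    hc, one_div_div, Real.log_div h_last.ne' hτ0.ne']

/-- For the staircase simplex `Δ = conv{v₀,…,v_{n+1}} ⊂ ℝ^{n+1}` with
`vᵢ = (a₁,…,aᵢ,0,…,0)`, `aⱼ > 0`, and `Δ_τ` the part of `Δ` where the last coordinate
is `≥ τ` (with `0 < τ < min(1, a_{n+1})`), one has
`∫_{Δ_τ} dx/(x₁⋯x_{n+1}) = (log a_{n+1} - log τ)^{n+1}/(n+1)!`. -/
theorem staircase_simplex_integral {n : ℕ}
    (a : Fin (n + 1) → ℝ) (ha : ∀ j, 0 < a j)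
    (v : Fin (n + 2) → (Fin (n + 1) → ℝ))
    (hv : ∀ i j, v i j = if (j : ℕ) < (i : ℕ) then a j else 0)
    (τ : ℝ) (hτ0 : 0 < τ) (hτ1 : τ < 1) (hτa : τ < a (Fin.last n)) :
    (∫ x in (convexHull ℝ (Set.range v)) ∩ {x : Fin (n + 1) → ℝ | τ ≤ x (Fin.last n)},
        (∏ j, x j)⁻¹) =
      (Real.log (a (Fin.last n)) - Real.log τ) ^ (n + 1) / (Nat.factorial (n + 1)) :=
  staircase_simplex_integral_general a ha v hv τ hτ0 hτa.le
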